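/- arXiv:2009.10399 — 2 statements merged into one kernel-verified Lean document; each statement's English description precedes it below -/
import Mathlib

section
/- Let L, N be a lightlike frame along the unit-speed spacelike curve γ̂, let ψ : I → ℝ be a smooth nowhere-vanishing function, and set L̄ = ψ L, N̄ = N/ψ with associated invariants ᾱ_L, ᾱ_N, ᾱ_G, σ̄_L = ᾱ_L′ + ᾱ_L ᾱ_G, σ̄_N = ᾱ_N′ − ᾱ_N ᾱ_G. Then σ̄_L = ψ σ_L and σ̄_N = ψ⁻¹ σ_N; in particular the vanishing (and the vanishing of all derivatives up to any given order at a point) of σ_L and σ_N does not depend on the choice of the lightlike frame. -/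
open scoped Topology

noncomputable section

/-- Points/vectors of Lorentz–Minkowski 3-space `ℝ³₁`. -/
abbrev R3 : Type := Fin 3 → ℝ

/-- The Lorentz–Minkowski scalar product `⟨x,y⟩ = -x₀y₀ + x₁y₁ + x₂y₂`. -/
def mink (x y : R3) : ℝ := -(x 0 * y 0) + x 1 * y 1 + x 2 * y 2

/-- `(L, N)` is a lightlike frame along the unit-speed spacelike curve `γ` on `I`:
`γ, L, N` are smooth on `I`, `⟨e,e⟩ = 1` (with `e = γ'`), `⟨e,L⟩ = ⟨e,N⟩ = 0`,
`⟨L,L⟩ = ⟨N,N⟩ = 0` and `⟨L,N⟩ = 1` on `I`. -/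
structure LightlikeFrame (I : Set ℝ) (γ L N : ℝ → R3) : Prop where
  smooth_gamma : ContDiffOn ℝ (⊤ : ℕ∞) γ I
  smooth_L : ContDiffOn ℝ (⊤ : ℕ∞) L I
  smooth_N : ContDiffOn ℝ (⊤ : ℕ∞) N I
  unit_speed : ∀ u ∈ I, mink (deriv γ u) (deriv γ u) = 1
  eL : ∀ u ∈ I, mink (deriv γ u) (L u) = 0
  eN : ∀ u ∈ I, mink (deriv γ u) (N u) = 0
  LL : ∀ u ∈ I, mink (L u) (L u) = 0
  NN : ∀ u ∈ I, mink (N u) (N u) = 0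
  LN : ∀ u ∈ I, mink (L u) (N u) = 1

/-- `α_L = ⟨γ'', L⟩`. -/
def alphaL (γ L : ℝ → R3) (u : ℝ) : ℝ := mink (deriv (deriv γ) u) (L u)

/-- `α_N = ⟨γ'', N⟩`. -/
def alphaN (γ N : ℝ → R3) (u : ℝ) : ℝ := mink (deriv (deriv γ) u) (N u)

/-- `α_G = ⟨L, N'⟩`. -/
def alphaG (L N : ℝ → R3) (u : ℝ) : ℝ := mink (L u) (deriv N u)

/-- `σ_L = α_L' + α_L α_G`. -/
def sigmaL (γ L N : ℝ → R3) (u : ℝ) : ℝ :=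
  deriv (alphaL γ L) u + alphaL γ L u * alphaG L N u

/-- `σ_N = α_N' - α_N α_G`. -/
def sigmaN (γ L N : ℝ → R3) (u : ℝ) : ℝ :=
  deriv (alphaN γ N) u - alphaN γ N u * alphaG L N u

/-- Vanishing to order `k` at a point is inherited by smooth multiples. -/
lemma iterate_deriv_eq_zero_of_eventuallyEq_mul {f g ψ : ℝ → ℝ} {x : ℝ}
    (hf : ContDiffAt ℝ (⊤ : ℕ∞) f x) (hψ : ContDiffAt ℝ (⊤ : ℕ∞) ψ x)
    (hg : g =ᶠ[𝓝 x] ψ * f) {k : ℕ} (hk : ∀ l ≤ k, deriv^[l] f x = 0) :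
    ∀ l ≤ k, deriv^[l] g x = 0 := by
  intro l hl
  have hle : (l : WithTop ℕ∞) ≤ ((⊤ : ℕ∞) : WithTop ℕ∞) := by exact_mod_cast le_top
  rw [← iteratedDeriv_eq_iterate, hg.iteratedDeriv_eq,
    iteratedDeriv_mul (hψ.of_le hle) (hf.of_le hle)]
  refine Finset.sum_eq_zero fun i _ => ?_
  rw [iteratedDeriv_eq_iterate (f := f), hk _ ((Nat.sub_le _ _).trans hl), mul_zero]

/-- Multiplication by a smooth nonvanishing function preserves the order of vanishing. -/
lemma iterate_deriv_eq_zero_iff_of_eventuallyEq_mul {f g ψ : ℝ → ℝ} {x : ℝ}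
    (hf : ContDiffAt ℝ (⊤ : ℕ∞) f x) (hψ : ContDiffAt ℝ (⊤ : ℕ∞) ψ x) (hψ0 : ψ x ≠ 0)
    (hg : g =ᶠ[𝓝 x] ψ * f) (k : ℕ) :
    (∀ l ≤ k, deriv^[l] f x = 0) ↔ ∀ l ≤ k, deriv^[l] g x = 0 := by
  refine ⟨iterate_deriv_eq_zero_of_eventuallyEq_mul hf hψ hg,
    iterate_deriv_eq_zero_of_eventuallyEq_mul ((hψ.mul hf).congr_of_eventuallyEq hg)
      (hψ.inv hψ0) ?_⟩
  filter_upwards [hg, hψ.continuousAt.eventually_ne hψ0] with y hy hy0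
  simp [hy, inv_mul_cancel_left₀ hy0]

lemma mink_smul_left (c : ℝ) (x y : R3) : mink (c • x) y = c * mink x y := by
  simp [mink]; ring

lemma mink_smul_right (c : ℝ) (x y : R3) : mink x (c • y) = c * mink x y := by
  simp [mink]; ring

lemma mink_add_right (x y z : R3) : mink x (y + z) = mink x y + mink x z := by
  simp [mink]; ring

lemma ContDiffOn.mink {s : Set ℝ} {n : WithTop ℕ∞} {f g : ℝ → R3}
    (hf : ContDiffOn ℝ n f s) (hg : ContDiffOn ℝ n g s) :
    ContDiffOn ℝ n (fun u => mink (f u) (g u)) s := by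
  rw [contDiffOn_pi] at hf hg
  exact ((((hf 0).mul (hg 0)).neg).add ((hf 1).mul (hg 1))).add ((hf 2).mul (hg 2))

lemma ContDiffOn.deriv_top {E : Type*} [NormedAddCommGroup E] [NormedSpace ℝ E]
    {s : Set ℝ} {f : ℝ → E} (hf : ContDiffOn ℝ (⊤ : ℕ∞) f s) (hs : IsOpen s) :
    ContDiffOn ℝ (⊤ : ℕ∞) (deriv f) s :=
  hf.deriv_of_isOpen hs (by simp)

lemma alphaL_smul (γ L : ℝ → R3) (φ : ℝ → ℝ) :
    alphaL γ (fun u => φ u • L u) = fun u => φ u * alphaL γ L u :=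
  funext fun _ => mink_smul_right _ _ _

lemma alphaN_smul (γ N : ℝ → R3) (φ : ℝ → ℝ) :
    alphaN γ (fun u => φ u • N u) = fun u => φ u * alphaN γ N u :=
  funext fun _ => mink_smul_right _ _ _

lemma alphaG_smul_inv_smul {L N : ℝ → R3} {ψ : ℝ → ℝ} {u : ℝ}
    (hN : DifferentiableAt ℝ N u) (hψ : DifferentiableAt ℝ ψ u) (h0 : ψ u ≠ 0)
    (hLN : mink (L u) (N u) = 1) :
    alphaG (fun u => ψ u • L u) (fun u => (ψ u)⁻¹ • N u) u =
      alphaG L N u - deriv ψ u / ψ u := by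
  have hd := ((hψ.hasDerivAt.fun_inv h0).fun_smul hN.hasDerivAt).deriv
  simp only [alphaG, hd, mink_smul_left, mink_add_right, mink_smul_right, hLN]
  field_simp
  ring

/-- With `L̄ = ψ L`, `N̄ = N/ψ`, the quantities `σ̄_L = ψ σ_L`
and `σ̄_N = ψ⁻¹ σ_N` on `I`; in particular the vanishing of `σ_L`, `σ_N` (together
with all derivatives up to any given order) at a point of `I` does not depend on
the choice of the lightlike frame. -/
theorem sigma_frame_change (a b : ℝ) (γ L N : ℝ → R3)
    (hframe : LightlikeFrame (Set.Ioo a b) γ L N)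
    (ψ : ℝ → ℝ) (hψ : ContDiffOn ℝ (⊤ : ℕ∞) ψ (Set.Ioo a b))
    (hψ0 : ∀ u ∈ Set.Ioo a b, ψ u ≠ 0) :
    (∀ u ∈ Set.Ioo a b,
      sigmaL γ (fun u => ψ u • L u) (fun u => (ψ u)⁻¹ • N u) u = ψ u * sigmaL γ L N u ∧
      sigmaN γ (fun u => ψ u • L u) (fun u => (ψ u)⁻¹ • N u) u = (ψ u)⁻¹ * sigmaN γ L N u) ∧
    (∀ u₀ ∈ Set.Ioo a b, ∀ k : ℕ,
      ((∀ l ≤ k, deriv^[l] (sigmaL γ L N) u₀ = 0) ↔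
        (∀ l ≤ k, deriv^[l] (sigmaL γ (fun u => ψ u • L u) (fun u => (ψ u)⁻¹ • N u)) u₀ = 0)) ∧
      ((∀ l ≤ k, deriv^[l] (sigmaN γ L N) u₀ = 0) ↔
        (∀ l ≤ k, deriv^[l] (sigmaN γ (fun u => ψ u • L u) (fun u => (ψ u)⁻¹ • N u)) u₀ = 0))) := by
  have hI : IsOpen (Set.Ioo a b) := isOpen_Ioo
  have hαL : ContDiffOn ℝ (⊤ : ℕ∞) (alphaL γ L) (Set.Ioo a b) :=
    ((hframe.smooth_gamma.deriv_top hI).deriv_top hI).mink hframe.smooth_L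
  have hαN : ContDiffOn ℝ (⊤ : ℕ∞) (alphaN γ N) (Set.Ioo a b) :=
    ((hframe.smooth_gamma.deriv_top hI).deriv_top hI).mink hframe.smooth_N
  have hαG : ContDiffOn ℝ (⊤ : ℕ∞) (alphaG L N) (Set.Ioo a b) :=
    hframe.smooth_L.mink (hframe.smooth_N.deriv_top hI)
  have hσL : ContDiffOn ℝ (⊤ : ℕ∞) (sigmaL γ L N) (Set.Ioo a b) :=
    (hαL.deriv_top hI).add (hαL.mul hαG)
  have hσN : ContDiffOn ℝ (⊤ : ℕ∞) (sigmaN γ L N) (Set.Ioo a b) :=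
    (hαN.deriv_top hI).sub (hαN.mul hαG)
  have hscale : ∀ u ∈ Set.Ioo a b,
      sigmaL γ (fun u => ψ u • L u) (fun u => (ψ u)⁻¹ • N u) u = ψ u * sigmaL γ L N u ∧
      sigmaN γ (fun u => ψ u • L u) (fun u => (ψ u)⁻¹ • N u) u = (ψ u)⁻¹ * sigmaN γ L N u := by
    intro u hu
    have diffAt {E : Type} [NormedAddCommGroup E] [NormedSpace ℝ E] {f : ℝ → E}
        (hf : ContDiffOn ℝ (⊤ : ℕ∞) f (Set.Ioo a b)) : DifferentiableAt ℝ f u :=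
      (hf.contDiffAt (hI.mem_nhds hu)).differentiableAt (by simp)
    have h0 := hψ0 u hu
    have hG := alphaG_smul_inv_smul (diffAt hframe.smooth_N) (diffAt hψ) h0 (hframe.LN u hu)
    have hdL := ((diffAt hψ).hasDerivAt.fun_mul (diffAt hαL).hasDerivAt).deriv
    have hdN := (((diffAt hψ).hasDerivAt.fun_inv h0).fun_mul (diffAt hαN).hasDerivAt).deriv
    constructor
    · simp only [sigmaL, hG, alphaL_smul, hdL]
      field_simp
      ring
    · simp only [sigmaN, hG, alphaN_smul, hdN]
      field_simp
      ring
  refine ⟨hscale, fun u₀ hu₀ k => ?_⟩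
  have hnhds := hI.mem_nhds hu₀
  have hψat := hψ.contDiffAt hnhds
  have h0 := hψ0 u₀ hu₀
  constructor
  · refine iterate_deriv_eq_zero_iff_of_eventuallyEq_mul (hσL.contDiffAt hnhds) hψat h0 ?_ k
    filter_upwards [hnhds] with u hu using (hscale u hu).1
  · refine iterate_deriv_eq_zero_iff_of_eventuallyEq_mul (hσN.contDiffAt hnhds) (hψat.inv h0)
      (inv_ne_zero h0) ?_ k
    filter_upwards [hnhds] with u hu using (hscale u hu).2
end
end

section
/- Let L, N be a lightlike frame along the unit-speed spacelike curve γ̂. At any singular point (u,v) of the osculating lightlike surface f_L(u,v) = γ̂(u) + v L(u), i.e. whenever v α_L(u) = 1, one has α_L(u) ≠ 0 and the vectors L(u) and L′(u) are linearly independent (so f_L is a front at every singular point); similarly, at any point with v α_N(u) = 1 the vectors N(u) and N′(u) are linearly independent. -/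
open scoped Topology

noncomputable section

theorem HasDerivAt.mink {x y : ℝ → R3} {x' y' : R3} {u : ℝ}
    (hx : HasDerivAt x x' u) (hy : HasDerivAt y y' u) :
    HasDerivAt (fun t => mink (x t) (y t)) (mink x' (y u) + mink (x u) y') u := by
  rw [hasDerivAt_pi] at hx hy
  refine ((((hx 0).mul (hy 0)).neg.add ((hx 1).mul (hy 1))).add
    ((hx 2).mul (hy 2))).congr_deriv ?_
  simp only [_root_.mink]
  ring

theorem mink_smul_add_smul_right (z x y : R3) (s t : ℝ) :
    mink z (s • x + t • y) = s * mink z x + t * mink z y := by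
  simp only [mink, Pi.add_apply, Pi.smul_apply, smul_eq_mul]
  ring

/-- Differentiating `⟨γ', X⟩ = 0` gives `⟨γ', X'⟩ = -⟨γ'', X⟩`. -/
theorem mink_deriv_eq_neg_of_orthogonal {I : Set ℝ} (hI : IsOpen I) {γ X : ℝ → R3}
    (hγ : ContDiffOn ℝ (⊤ : ℕ∞) γ I) (hX : ContDiffOn ℝ (⊤ : ℕ∞) X I)
    (horth : ∀ u ∈ I, mink (deriv γ u) (X u) = 0) {u : ℝ} (hu : u ∈ I) :
    mink (deriv γ u) (deriv X u) = -mink (deriv (deriv γ) u) (X u) := by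
  have hI' : I ∈ 𝓝 u := hI.mem_nhds hu
  have hγ' : HasDerivAt (deriv γ) (deriv (deriv γ) u) u :=
    (((hγ.deriv_of_isOpen (m := (⊤ : ℕ∞)) hI (by simp)).differentiableOn
      (by simp)).differentiableAt hI').hasDerivAt
  have hX' : HasDerivAt X (deriv X u) u :=
    ((hX.differentiableOn (by simp)).differentiableAt hI').hasDerivAt
  have hzero : HasDerivAt (fun t => mink (deriv γ t) (X t)) 0 u :=
    (hasDerivAt_const u (0 : ℝ)).congr_of_eventuallyEq
      (Filter.eventually_of_mem hI' horth)
  linarith [(hγ'.mink hX').unique hzero]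

/-- A nonzero vector `x ⊥ e` and a vector `y` not orthogonal to `e` are independent. -/
theorem linearIndependent_pair_of_mink {e x y : R3} (hx : x ≠ 0) (hex : mink e x = 0)
    (hey : mink e y ≠ 0) : LinearIndependent ℝ ![x, y] := by
  refine LinearIndependent.pair_iff.2 fun s t hst => ?_
  have hpair := mink_smul_add_smul_right e x y s t
  have hzero : mink e 0 = 0 := by simp [mink]
  rw [hst, hzero, hex, mul_zero, zero_add] at hpair
  have ht : t = 0 := (mul_eq_zero.1 hpair.symm).resolve_right hey
  subst ht
  exact ⟨by simpa [hx] using hst, rfl⟩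

/-- At any singular point `(u,v)` of `f_L` (i.e. `v α_L(u) = 1`) one has
`α_L(u) ≠ 0` and `L(u)`, `L'(u)` are linearly independent (so `f_L` is a front at every
singular point); similarly for `f_N`. -/
theorem front_at_singular_points (a b : ℝ) (γ L N : ℝ → R3)
    (hframe : LightlikeFrame (Set.Ioo a b) γ L N) :
    ∀ u ∈ Set.Ioo a b, ∀ v : ℝ,
      (v * alphaL γ L u = 1 →
        alphaL γ L u ≠ 0 ∧ LinearIndependent ℝ ![L u, deriv L u]) ∧
      (v * alphaN γ N u = 1 →
        alphaN γ N u ≠ 0 ∧ LinearIndependent ℝ ![N u, deriv N u]) := by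
  intro u hu v
  have hLN := hframe.LN u hu
  have hL : L u ≠ 0 := fun h => by simp [h, mink] at hLN
  have hN : N u ≠ 0 := fun h => by simp [h, mink] at hLN
  refine ⟨fun h => ?_, fun h => ?_⟩
  · have hα : alphaL γ L u ≠ 0 := right_ne_zero_of_mul_eq_one h
    refine ⟨hα, linearIndependent_pair_of_mink hL (hframe.eL u hu) ?_⟩
    rw [mink_deriv_eq_neg_of_orthogonal isOpen_Ioo hframe.smooth_gamma hframe.smooth_L
      hframe.eL hu]
    exact neg_ne_zero.2 hα
  · have hα : alphaN γ N u ≠ 0 := right_ne_zero_of_mul_eq_one h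
    refine ⟨hα, linearIndependent_pair_of_mink hN (hframe.eN u hu) ?_⟩
    rw [mink_deriv_eq_neg_of_orthogonal isOpen_Ioo hframe.smooth_gamma hframe.smooth_N
      hframe.eN hu]
    exact neg_ne_zero.2 hα
end
end
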